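/- arXiv:2510.01357 — 4 statements merged into one kernel-verified Lean document; each statement's English description precedes it below -/
import Mathlib

section
/- Let α : ℝ → ℝ be a locally Lipschitz, strictly increasing function with α(0) = 0 (an extended class-K function). Let ψ : ℝ → ℝ be differentiable and satisfy ψ(0) ≥ 0 and ψ'(t) + α(ψ(t)) ≥ 0 for all t ≥ 0. Then ψ(t) ≥ 0 for all t ≥ 0. -/
/-- **Comparison lemma for first-order control barrier functions.**
If `α : ℝ → ℝ` is a locally Lipschitz, strictly increasing function with `α 0 = 0`
(an extended class-K function), and `ψ : ℝ → ℝ` is differentiable with `ψ 0 ≥ 0` and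
`ψ' t + α (ψ t) ≥ 0` for all `t ≥ 0`, then `ψ t ≥ 0` for all `t ≥ 0`. -/
theorem barrier_comparison
    (α : ℝ → ℝ) (hα_lip : LocallyLipschitz α) (hα_mono : StrictMono α) (hα0 : α 0 = 0)
    (ψ : ℝ → ℝ) (hψ_diff : Differentiable ℝ ψ)
    (hψ0 : 0 ≤ ψ 0)
    (hineq : ∀ t : ℝ, 0 ≤ t → 0 ≤ deriv ψ t + α (ψ t)) :
    ∀ t : ℝ, 0 ≤ t → 0 ≤ ψ t := by
  intro t ht
  -- Where `ψ = -ε < 0`, monotonicity gives `ψ' ≥ -α (-ε) > 0`, so `ψ` can never cross the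
  -- level `-ε` downwards: the constant `ε` is a fence for `-ψ`.
  have key : ∀ ε : ℝ, 0 < ε → -ψ t ≤ 0 + ε := by
    intro ε hε
    rw [zero_add]
    refine image_le_of_deriv_right_lt_deriv_boundary (f := fun x => -ψ x)
      (f' := fun x => -deriv ψ x) (B := fun _ => ε) (B' := fun _ => 0) (a := 0) (b := t)
      hψ_diff.continuous.neg.continuousOn
      (fun x _ => (hψ_diff x).hasDerivAt.neg.hasDerivWithinAt)
      (by linarith) (fun x => hasDerivAt_const x ε) ?_ ⟨ht, le_rfl⟩
    intro x hx hxε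
    have hα_neg : α (ψ x) < 0 := hα0 ▸ hα_mono (by linarith : ψ x < 0)
    linarith [hineq x hx.1]
  linarith [le_of_forall_pos_le_add key]
end

section
/- Fix m ≥ 1. For each i ∈ {1,…,m}, let α_i : ℝ → ℝ be locally Lipschitz, strictly increasing with α_i(0) = 0. Let ψ_0 : ℝ → ℝ be a function and define recursively ψ_i(t) = ψ_{i−1}'(t) + α_i(ψ_{i−1}(t)) for i ∈ {1,…,m}, assuming each ψ_{i−1} is differentiable on [0,∞). Suppose ψ_i(0) ≥ 0 for all i ∈ {0,…,m−1}, and ψ_m(t) ≥ 0 for all t ≥ 0. Then ψ_i(t) ≥ 0 for all i ∈ {0,…,m−1} and all t ≥ 0; in particular ψ_0(t) ≥ 0 for all t ≥ 0. -/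
/-!
The cascade is descended one level at a time: if `ψ (i + 1) ≥ 0` on `[0, ∞)`, then
`(ψ i)' ≥ -α (i + 1) (ψ i)`, and since `α (i + 1)` is negative on the negative half-line, `ψ i` is
strictly increasing in time wherever it is negative. Hence it cannot cross any level `-ε < 0`
downwards, and so stays nonnegative (`nonneg_of_deriv_add_nonneg`).
-/

/-- One level of the cascade. The function `-φ` is compared with the constant barrier `ε > 0`: at
a time where `-φ = ε`, its derivative is at most `a (-ε) < 0`. -/
lemma nonneg_of_deriv_add_nonneg {a φ : ℝ → ℝ} (ha : StrictMono a) (ha0 : a 0 = 0)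
    (hd : ∀ t : ℝ, 0 ≤ t → DifferentiableAt ℝ φ t)
    (h : ∀ t : ℝ, 0 ≤ t → 0 ≤ deriv φ t + a (φ t)) (h0 : 0 ≤ φ 0) (t : ℝ) (ht : 0 ≤ t) :
    0 ≤ φ t := by
  refine le_of_forall_pos_le_add fun ε hε => ?_
  have key : -φ t ≤ ε :=
    image_le_of_deriv_right_lt_deriv_boundary (a := 0) (b := t) (f := fun s => -φ s)
      (f' := fun s => -deriv φ s) (B := fun _ => ε) (B' := fun _ => 0)
      (fun s hs => (hd s hs.1).continuousAt.neg.continuousWithinAt)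
      (fun s hs => (hd s hs.1).hasDerivAt.neg.hasDerivWithinAt)
      (by linarith) (fun s => hasDerivAt_const s ε)
      (fun s hs hs' => by
        have hneg : φ s < 0 := by linarith
        have := ha hneg
        have := h s hs.1
        linarith)
      ⟨ht, le_rfl⟩
  linarith

/-- **Trajectory-level High Order Control Barrier Function safety theorem.**
Fix `m ≥ 1`.  For `i ∈ {1, …, m}` let `α i : ℝ → ℝ` be locally Lipschitz, strictly
increasing with `α i 0 = 0` (class-K).  Let `ψ 0 : ℝ → ℝ` be given and define recursively
`ψ (i+1) t = (ψ i)' t + α (i+1) (ψ i t)`, each `ψ i` (for `i < m`) being differentiable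
on `[0, ∞)`.  If `ψ i 0 ≥ 0` for all `i ∈ {0, …, m-1}` and `ψ m t ≥ 0` for all `t ≥ 0`,
then `ψ i t ≥ 0` for all `i ∈ {0, …, m-1}` and all `t ≥ 0`; in particular `ψ 0 t ≥ 0`. -/
theorem hocbf_safety
    (m : ℕ) (hm : 1 ≤ m)
    (α : ℕ → ℝ → ℝ)
    (hα_lip : ∀ i, 1 ≤ i → i ≤ m → LocallyLipschitz (α i))
    (hα_mono : ∀ i, 1 ≤ i → i ≤ m → StrictMono (α i))
    (hα0 : ∀ i, 1 ≤ i → i ≤ m → α i 0 = 0)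
    (ψ : ℕ → ℝ → ℝ)
    (hdiff : ∀ i, i < m → ∀ t : ℝ, 0 ≤ t → DifferentiableAt ℝ (ψ i) t)
    (hrec : ∀ i, i < m → ∀ t : ℝ, 0 ≤ t → ψ (i + 1) t = deriv (ψ i) t + α (i + 1) (ψ i t))
    (hinit : ∀ i, i < m → 0 ≤ ψ i 0)
    (hfinal : ∀ t : ℝ, 0 ≤ t → 0 ≤ ψ m t) :
    (∀ i, i < m → ∀ t : ℝ, 0 ≤ t → 0 ≤ ψ i t) ∧ (∀ t : ℝ, 0 ≤ t → 0 ≤ ψ 0 t) := by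
  have main : ∀ i, i < m → ∀ t : ℝ, 0 ≤ t → 0 ≤ ψ i t := by
    intro i hi
    -- Downward induction on the level, starting from `ψ m ≥ 0`.
    have hle : ∀ j, j ≤ m → ∀ t : ℝ, 0 ≤ t → 0 ≤ ψ j t := by
      intro j hj
      induction hj using Nat.decreasingInduction with
      | self => exact hfinal
      | of_succ k hk ih =>
        exact nonneg_of_deriv_add_nonneg (hα_mono (k + 1) (by omega) hk)
          (hα0 (k + 1) (by omega) hk) (hdiff k hk)
          (fun t ht => hrec k hk t ht ▸ ih t ht) (hinit k hk)
    exact hle i hi.le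
  exact ⟨main, main 0 hm⟩
end

section
/- Let l > 0, w > 0, c ∈ ℝ², and ψ ∈ ℝ, and let R = { c + Rot(ψ)·p : p ∈ [−l/2, l/2] × [−w/2, w/2] }, where Rot(ψ) is the planar rotation by angle ψ. Then for every angle φ ∈ ℝ, the supremum over x ∈ R of ⟨x − c, (cos φ, sin φ)⟩ equals r_o(ψ − φ) = (w·|sin(ψ − φ)| + l·|cos(ψ − φ)|)/2, and it is attained. -/
/-!
In body coordinates `p`, the projection of `Rot(ψ) p` onto `(cos φ, sin φ)` is
`p.1 * cos (ψ - φ) - p.2 * sin (ψ - φ)`. The two coordinates range independently over symmetric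
intervals, and the maximum of `p * t` over `p ∈ [-a, a]` is `a * |t|`, attained at an endpoint; so
the support function is the sum of the two one-dimensional maxima.
-/

lemma isGreatest_mul_Icc_symm {a : ℝ} (ha : 0 ≤ a) (t : ℝ) :
    IsGreatest {v : ℝ | ∃ p ∈ Set.Icc (-a) a, v = p * t} (a * |t|) := by
  constructor
  · rcases abs_cases t with ⟨h, _⟩ | ⟨h, _⟩
    · exact ⟨a, ⟨by linarith, le_rfl⟩, by rw [h]⟩
    · exact ⟨-a, ⟨le_rfl, by linarith⟩, by rw [h]; ring⟩
  · rintro v ⟨p, hp, rfl⟩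
    calc p * t ≤ |p * t| := le_abs_self _
      _ = |p| * |t| := abs_mul p t
      _ ≤ a * |t| := by
        gcongr
        exact abs_le.mpr hp

open Real in
/-- **Support function of the rotated vessel footprint.**
Let `R` be the rectangle of length `l > 0` (along its own x-axis) and width `w > 0`,
centered at `c` and rotated by the heading angle `ψ`.  Then for every angle `φ`, the
supremum over `x ∈ R` of the Euclidean inner product `⟨x - c, (cos φ, sin φ)⟩` equals
`r_o(ψ - φ) = (w·|sin (ψ - φ)| + l·|cos (ψ - φ)|)/2`, and it is attained. -/
theorem rotated_rect_support_function
    (l w : ℝ) (hl : 0 < l) (hw : 0 < w) (c : ℝ × ℝ) (ψ : ℝ)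
    (R : Set (ℝ × ℝ))
    (hR : R = {x : ℝ × ℝ | ∃ p : ℝ × ℝ,
        p.1 ∈ Set.Icc (-(l / 2)) (l / 2) ∧ p.2 ∈ Set.Icc (-(w / 2)) (w / 2) ∧
        x = (c.1 + (p.1 * cos ψ - p.2 * sin ψ), c.2 + (p.1 * sin ψ + p.2 * cos ψ))})
    (φ : ℝ) :
    IsGreatest
      {v : ℝ | ∃ x ∈ R, v = (x.1 - c.1) * cos φ + (x.2 - c.2) * sin φ}
      ((w * |sin (ψ - φ)| + l * |cos (ψ - φ)|) / 2) := by
  subst hR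
  obtain ⟨⟨p, hp, hpv⟩, hpmax⟩ :=
    isGreatest_mul_Icc_symm (half_pos hl).le (cos (ψ - φ))
  -- The sine enters the projection with a minus sign; this leaves the absolute value unchanged.
  obtain ⟨⟨q, hq, hqv⟩, hqmax⟩ :=
    isGreatest_mul_Icc_symm (half_pos hw).le (-sin (ψ - φ))
  rw [abs_neg] at hqv hqmax
  have key : ∀ p q : ℝ,
      (c.1 + (p * cos ψ - q * sin ψ) - c.1) * cos φ
        + (c.2 + (p * sin ψ + q * cos ψ) - c.2) * sin φ
      = p * cos (ψ - φ) + q * -sin (ψ - φ) := by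
    intro p q
    rw [cos_sub, sin_sub]
    ring
  constructor
  · refine ⟨_, ⟨(p, q), hp, hq, rfl⟩, ?_⟩
    simp only [key]
    linarith
  · rintro v ⟨x, ⟨p', hp', hq', rfl⟩, rfl⟩
    simp only [key]
    have h₁ := hpmax ⟨p'.1, hp', rfl⟩
    have h₂ := hqmax ⟨p'.2, hq', rfl⟩
    linarith
end

section
/- Let a, b > 0 and r ≥ 0. Then the inflated elliptical region E' = { (x, y) ∈ ℝ² : x²/(a+r)² + y²/(b+r)² ≤ 1 } is contained in the closed r-neighborhood of the original elliptical region E = { (x, y) ∈ ℝ² : x²/a² + y²/b² ≤ 1 }; that is, every point of E' is within Euclidean distance r of some point of E. Equivalently, for every unit vector (u₁, u₂) ∈ ℝ², √((a+r)²u₁² + (b+r)²u₂²) ≤ √(a²u₁² + b²u₂²) + r. -/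
/-! A point of the inflated ellipse has the form `((a+r)s, (b+r)t)` with `s² + t² ≤ 1`; the point
`(as, bt)` lies in the original ellipse, at distance `r √(s² + t²) ≤ r`.

For the support functions, squaring and using `u₁² + u₂² = 1` reduces the inequality to
`a u₁² + b u₂² ≤ √(a² u₁² + b² u₂²)`, an instance of Cauchy–Schwarz. -/

/-- **The inflated ellipse is contained in the `r`-neighborhood of the ellipse.**
For semi-axes `a, b > 0` and an inflation radius `r ≥ 0`, every point of the inflated
elliptical region `E' = {(x, y) : x²/(a+r)² + y²/(b+r)² ≤ 1}` lies within Euclidean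
distance `r` of some point of the original region `E = {(x, y) : x²/a² + y²/b² ≤ 1}`;
equivalently, for every unit vector `(u₁, u₂)` the support functions satisfy
`√((a+r)²u₁² + (b+r)²u₂²) ≤ √(a²u₁² + b²u₂²) + r`. -/
theorem inflated_ellipse_in_neighborhood
    (a b r : ℝ) (ha : 0 < a) (hb : 0 < b) (hr : 0 ≤ r) :
    (∀ p : ℝ × ℝ, p.1 ^ 2 / (a + r) ^ 2 + p.2 ^ 2 / (b + r) ^ 2 ≤ 1 →
      ∃ q : ℝ × ℝ, q.1 ^ 2 / a ^ 2 + q.2 ^ 2 / b ^ 2 ≤ 1 ∧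
        Real.sqrt ((p.1 - q.1) ^ 2 + (p.2 - q.2) ^ 2) ≤ r) ∧
    (∀ u₁ u₂ : ℝ, u₁ ^ 2 + u₂ ^ 2 = 1 →
      Real.sqrt ((a + r) ^ 2 * u₁ ^ 2 + (b + r) ^ 2 * u₂ ^ 2) ≤
        Real.sqrt (a ^ 2 * u₁ ^ 2 + b ^ 2 * u₂ ^ 2) + r) := by
  constructor
  · rintro ⟨x, y⟩ h
    have hA : 0 < a + r := by positivity
    have hB : 0 < b + r := by positivity
    obtain ⟨s, rfl⟩ : ∃ s, x = (a + r) * s := ⟨x / (a + r), by field_simp⟩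
    obtain ⟨t, rfl⟩ : ∃ t, y = (b + r) * t := ⟨y / (b + r), by field_simp⟩
    have hst : s ^ 2 + t ^ 2 ≤ 1 := by
      simpa [mul_pow, hA.ne', hB.ne'] using h
    refine ⟨(a * s, b * t), ?_, ?_⟩
    · simpa [mul_pow, ha.ne', hb.ne'] using hst
    · apply Real.sqrt_le_iff.mpr ⟨hr, ?_⟩
      -- The displacement is `(r * s, r * t)`.
      calc ((a + r) * s - a * s) ^ 2 + ((b + r) * t - b * t) ^ 2
          = r ^ 2 * (s ^ 2 + t ^ 2) := by ring
        _ ≤ r ^ 2 := mul_le_of_le_one_right (sq_nonneg r) hst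
  · intro u v huv
    have hnn : 0 ≤ a ^ 2 * u ^ 2 + b ^ 2 * v ^ 2 := by positivity
    have key : a * u ^ 2 + b * v ^ 2 ≤ Real.sqrt (a ^ 2 * u ^ 2 + b ^ 2 * v ^ 2) := by
      apply Real.le_sqrt_of_sq_le
      -- Cauchy–Schwarz: multiplying the right side by `u² + v² = 1`, the defect is a square.
      have e : a ^ 2 * u ^ 2 + b ^ 2 * v ^ 2 - (a * u ^ 2 + b * v ^ 2) ^ 2
          = ((a - b) * u * v) ^ 2 := by
        linear_combination (-(a ^ 2 * u ^ 2 + b ^ 2 * v ^ 2)) * huv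
      linarith [sq_nonneg ((a - b) * u * v)]
    apply Real.sqrt_le_iff.mpr ⟨by positivity, ?_⟩
    have e : (a + r) ^ 2 * u ^ 2 + (b + r) ^ 2 * v ^ 2
        = (a ^ 2 * u ^ 2 + b ^ 2 * v ^ 2) + 2 * (r * (a * u ^ 2 + b * v ^ 2)) + r ^ 2 := by
      linear_combination r ^ 2 * huv
    rw [e, add_sq, Real.sq_sqrt hnn]
    linarith [mul_le_mul_of_nonneg_left key hr]
end
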